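/- Generalized convergent Stirling summation formula for the log-factorial sum: Let x ∈ ℝ with x > 0 and let a ∈ ℕ₀. Then the series ∑_{k=1}^{∞} (−1)^k (∑_{l=1}^{k} ((−1)^l/((l+a)(l+a+1))) S_k^{(1)}(l) B_{l+a+1}({x})) / ((x+1)(x+2)⋯(x+k)) converges absolutely, and ∑_{k=1}^{⌊x⌋} ln(k) = x ln(x) − x + (1/2) ln(2π) − B_1({x}) ln(x) + ∑_{k=1}^{a} B_{k+1}({x})/(k(k+1) x^k) + (1/x^a) ∑_{k=1}^{∞} (−1)^k (∑_{l=1}^{k} ((−1)^l/((l+a)(l+a+1))) S_k^{(1)}(l) B_{l+a+1}({x})) / ((x+1)(x+2)⋯(x+k)). -/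

import Mathlib

open Finset in
/-- Unsigned Stirling numbers of the first kind, via the rising-factorial recurrence:
`z(z+1)⋯(z+k−1) = ∑ l, stirling1Unsigned k l * z^l`. -/
def stirling1Unsigned : ℕ → ℕ → ℕ
  | 0, 0 => 1
  | 0, _ + 1 => 0
  | k + 1, 0 => k * stirling1Unsigned k 0
  | k + 1, l + 1 => stirling1Unsigned k l + k * stirling1Unsigned k (l + 1)

/-- The Stirling numbers of the first kind `S_k^{(1)}(l)` of the paper, defined by
`z(z+1)⋯(z+k−1) = (−1)^k ∑_{l=0}^k (−1)^l S_k^{(1)}(l) z^l`, i.e.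
`S_k^{(1)}(l) = (−1)^{k−l}` times the coefficient of `z^l` in the rising factorial. -/
def S1 (k l : ℕ) : ℤ := (-1) ^ (k + l) * stirling1Unsigned k l

/-- The `n`-th Bernoulli polynomial `B_n(x) = ∑_{k=0}^n C(n,k) B_k x^{n−k}`,
with `B_1 = −1/2`. -/
noncomputable def bernPoly (n : ℕ) (x : ℝ) : ℝ :=
  ∑ k ∈ Finset.range (n + 1), (n.choose k : ℝ) * (bernoulli k : ℝ) * x ^ (n - k)

/-- The generalized binomial coefficient `C(w,k) = w(w−1)⋯(w−k+1)/k!`. -/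
noncomputable def cchoose (w : ℂ) (k : ℕ) : ℂ :=
  (∏ i ∈ Finset.range k, (w - i)) / (k.factorial : ℂ)

/-- The rising product `(z+1)(z+2)⋯(z+k)`. -/
noncomputable def risingProd (z : ℂ) (k : ℕ) : ℂ :=
  ∏ i ∈ Finset.range k, (z + i + 1)

/-- The rising product `(x+1)(x+2)⋯(x+k)` over the reals. -/
noncomputable def risingProdR (x : ℝ) (k : ℕ) : ℝ :=
  ∏ i ∈ Finset.range k, (x + i + 1)

/-- The digamma function `ψ(z) = Γ′(z)/Γ(z)`. -/
noncomputable def digamma (z : ℂ) : ℂ := deriv Complex.Gamma z / Complex.Gamma z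

open Real MeasureTheory Filter Topology

noncomputable def pdens (s : ℝ) : ℝ := π / 2 / cosh (π * s) ^ 2

lemma pow_div_cosh_le (n : ℕ) : ∃ C : ℝ, 0 ≤ C ∧ ∀ s : ℝ, (1 + |s|) ^ n / cosh (π * s) ≤ C * (1 + s ^ 2)⁻¹ := by
  refine ⟨(n+2).factorial * rexp 1 * 2, by positivity, fun s => ?_⟩
  have h1 : (1 + |s|) ^ (n+2) / (n+2).factorial ≤ rexp (1 + |s|) :=
    Real.pow_div_factorial_le_exp (1 + |s|) (by positivity) (n+2)
  have h2 : rexp |s| ≤ 2 * cosh (π * s) := by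
    have h3 : rexp |s| ≤ 2 * cosh s := by
      rw [← Real.cosh_abs, Real.cosh_eq]
      have := Real.exp_pos (-|s|)
      linarith
    have h4 : cosh s ≤ cosh (π * s) := by
      rw [Real.cosh_le_cosh, abs_mul, abs_of_pos Real.pi_pos]
      have := Real.pi_gt_three
      nlinarith [abs_nonneg s]
    linarith
  have hc := Real.cosh_pos (π * s)
  rw [div_le_iff₀ (by positivity)] at h1
  rw [Real.exp_add] at h1
  rw [← div_eq_mul_inv, div_le_div_iff₀ hc (by positivity)]
  have h5 : 1 + s^2 ≤ (1+|s|)^2 := by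
    nlinarith [abs_nonneg s, sq_abs s]
  calc (1 + |s|) ^ n * (1 + s^2) ≤ (1 + |s|) ^ n * (1+|s|)^2 := by gcongr
    _ = (1 + |s|) ^ (n+2) := by ring
    _ ≤ _ := h1
    _ ≤ rexp 1 * (2 * cosh (π * s)) * (n+2).factorial := by gcongr
    _ = _ := by ring

lemma integrable_pow_div_cosh (n : ℕ) : Integrable (fun s : ℝ => (1 + |s|) ^ n / cosh (π * s)) := by
  obtain ⟨C, hC, h⟩ := pow_div_cosh_le n
  refine (integrable_inv_one_add_sq.const_mul C).mono' ?_ (Eventually.of_forall fun s => ?_)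
  · refine Continuous.aestronglyMeasurable ?_
    refine Continuous.div (by fun_prop) (by fun_prop) (fun s => (Real.cosh_pos _).ne')
  · rw [Real.norm_of_nonneg (by have := Real.cosh_pos (π * s); positivity)]
    exact h s

lemma pdens_nonneg (s : ℝ) : 0 ≤ pdens s := by
  unfold pdens; positivity

lemma continuous_pdens : Continuous pdens := by
  unfold pdens
  refine Continuous.div (by fun_prop) (by fun_prop) (fun s => ?_)
  have := Real.cosh_pos (π * s)
  positivity

lemma pdens_mul_cosh_le (s : ℝ) : pdens s * cosh (π * s) ≤ 2 / cosh (π * s) := by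
  unfold pdens
  have hc := Real.cosh_pos (π * s)
  have : π / 2 / cosh (π * s) ^ 2 * cosh (π * s) = π / 2 / cosh (π * s) := by
    field_simp
  rw [this]
  gcongr
  linarith [Real.pi_lt_four]

lemma pdens_le (s : ℝ) : pdens s ≤ 2 / cosh (π * s) := by
  refine le_trans ?_ (pdens_mul_cosh_le s)
  have := Real.one_le_cosh (π * s)
  nlinarith [pdens_nonneg s]

/-- main integrability criterion -/
lemma integrable_pdens_mul (F : ℝ → ℂ) (hF : Continuous F) (C : ℝ) (m : ℕ)
    (hb : ∀ s, ‖F s‖ ≤ C * (1 + |s|) ^ m) : Integrable (fun s : ℝ => (pdens s : ℂ) * F s) := by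
  refine ((integrable_pow_div_cosh m).const_mul (2 * C)).mono' ?_ (Eventually.of_forall fun s => ?_)
  · exact ((Complex.continuous_ofReal.comp continuous_pdens).mul hF).aestronglyMeasurable
  · rw [norm_mul, Complex.norm_real, Real.norm_of_nonneg (pdens_nonneg s)]
    calc pdens s * ‖F s‖ ≤ (2 / cosh (π * s)) * (C * (1 + |s|) ^ m) := by
          have := Real.cosh_pos (π * s)
          exact mul_le_mul (pdens_le s) (hb s) (norm_nonneg _) (by positivity)
      _ = _ := by ring

lemma integrable_pdens : Integrable pdens := by
  refine ((integrable_pow_div_cosh 0).const_mul 2).mono' continuous_pdens.aestronglyMeasurable (Eventually.of_forall fun s => ?_)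
  rw [Real.norm_of_nonneg (pdens_nonneg s)]
  simpa [div_eq_mul_inv] using pdens_le s

lemma integral_pdens : ∫ s, pdens s = 1 := by
  have hd : ∀ s : ℝ, HasDerivAt (fun s => tanh (π * s) / 2) (pdens s) s := by
    intro s
    have hc := Real.cosh_pos (π * s)
    have h1 : HasDerivAt (fun s => π * s) π s := by simpa using (hasDerivAt_id s).const_mul π
    have h2 := ((Real.hasDerivAt_sinh _).comp s h1).div ((Real.hasDerivAt_cosh _).comp s h1) hc.ne'
    have h3 := h2.div_const 2
    have h4 : (fun s => tanh (π * s) / 2) = fun x => ((sinh ∘ fun s => π * s) / cosh ∘ fun s => π * s) x / 2 := by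
      ext t; simp [Real.tanh_eq_sinh_div_cosh]
    rw [h4]
    refine h3.congr_deriv ?_
    simp only [Function.comp, pdens]
    have := Real.cosh_sq (π * s)
    field_simp
    linarith
  have ht : Tendsto (fun s : ℝ => tanh (π * s) / 2) atTop (𝓝 (1/2)) := by
    have : Tendsto (fun s : ℝ => (1 - 2 / (rexp (2 * (π * s)) + 1)) / 2) atTop (𝓝 ((1 - 0)/2)) := by
      refine ((tendsto_const_nhds).sub ?_).div_const 2
      refine Tendsto.div_atTop tendsto_const_nhds ?_
      refine tendsto_atTop_add_const_right _ _ ?_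
      refine Real.tendsto_exp_atTop.comp ?_
      exact (tendsto_id.const_mul_atTop Real.pi_pos).const_mul_atTop two_pos
    simp only [sub_zero] at this
    refine this.congr fun s => ?_
    rw [Real.tanh_eq_sinh_div_cosh, Real.sinh_eq, Real.cosh_eq, two_mul (π * s), Real.exp_add, Real.exp_neg]
    have := Real.exp_pos (π * s)
    field_simp
    ring
  have ht' : Tendsto (fun s : ℝ => tanh (π * s) / 2) atBot (𝓝 (-(1/2))) := by
    have := (ht.comp tendsto_neg_atBot_atTop).neg
    refine this.congr fun s => ?_
    simp [Real.tanh_neg]; 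
    ring
  rw [integral_of_hasDerivAt_of_tendsto hd integrable_pdens ht' ht]
  norm_num

lemma norm_sin_ge (w : ℂ) : |Real.sinh w.im| ≤ ‖Complex.sin w‖ := by
  have h : ‖Complex.sin w‖ ^ 2 = Real.sin w.re ^ 2 + Real.sinh w.im ^ 2 := by
    rw [Complex.sin_eq, ← Complex.normSq_eq_norm_sq, Complex.normSq_apply]
    simp only [← Complex.ofReal_sin, ← Complex.ofReal_cos, ← Complex.ofReal_sinh, ← Complex.ofReal_cosh]
    simp only [Complex.add_re, Complex.add_im, Complex.mul_re, Complex.mul_im, Complex.ofReal_re, Complex.ofReal_im, Complex.I_re, Complex.I_im]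
    linear_combination Real.sin w.re ^ 2 * Real.cosh_sq w.im + Real.sinh w.im ^ 2 * Real.sin_sq_add_cos_sq w.re
  refine abs_le_of_sq_le_sq ?_ (norm_nonneg _)
  rw [h]; nlinarith [sq_nonneg (Real.sin w.re)]

lemma sin_pi_ne_zero (w : ℂ) (hw : |w.re| ≤ 1/2) (h0 : w ≠ 0) : Complex.sin (π * w) ≠ 0 := by
  intro h
  rw [Complex.sin_eq_zero_iff] at h
  obtain ⟨k, hk⟩ := h
  have hk' : w = k := by
    have : (π : ℂ) ≠ 0 := by exact_mod_cast Real.pi_ne_zero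
    apply mul_left_cancel₀ this
    rw [hk]; ring
  rw [hk'] at hw h0
  simp only [Complex.intCast_re] at hw
  have : |k| < 1 := by
    have : |(k:ℝ)| < 1 := by linarith
    exact_mod_cast this
  rw [Int.abs_lt_one_iff] at this
  simp [this] at h0

lemma contour_zero (g : ℂ → ℂ) (U : Set ℂ) (hU : IsOpen U)
    (hsub : ∀ w : ℂ, |w.re| ≤ 1/2 → w ∈ U) (hg : DifferentiableOn ℂ g U) (C : ℝ) (m : ℕ)
    (hb : ∀ w : ℂ, |w.re| ≤ 1/2 → ‖g w‖ ≤ C * (1 + |w.im|) ^ m) :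
    ∫ s : ℝ, (pdens s : ℂ) * (g (1/2 + s * Complex.I) - g (-1/2 + s * Complex.I)) = deriv g 0 := by
  have h0U : (0:ℂ) ∈ U := hsub 0 (by simp)
  have hUn : U ∈ 𝓝 (0:ℂ) := hU.mem_nhds h0U
  set k := dslope (dslope g 0) 0 with hk
  set q := dslope (fun z : ℂ => Complex.sin (π * z)) 0 with hq
  set G : ℂ → ℂ := fun z => g z - g 0 - deriv g 0 * z with hG
  have hkd : DifferentiableOn ℂ k U := by
    rw [hk, Complex.differentiableOn_dslope hUn, Complex.differentiableOn_dslope hUn]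
    exact hg
  have hqd : DifferentiableOn ℂ q U := by
    rw [hq, Complex.differentiableOn_dslope hUn]
    fun_prop
  have hq0 : ∀ w : ℂ, |w.re| ≤ 1/2 → q w ≠ 0 := by
    intro w hw
    by_cases h : w = 0
    · subst h
      rw [hq, dslope_same]
      have : HasDerivAt (fun z : ℂ => Complex.sin (π * z)) (Complex.cos (π * 0) * (π * 1)) 0 :=
        (Complex.hasDerivAt_sin _).comp (0:ℂ) ((hasDerivAt_id (0:ℂ)).const_mul (π:ℂ))
      rw [this.deriv]
      simp [Real.pi_ne_zero]
    · rw [hq, dslope_of_ne _ h, slope_def_field]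
      simp only [mul_zero, Complex.sin_zero, sub_zero]
      exact div_ne_zero (sin_pi_ne_zero w hw h) h
  set F : ℂ → ℂ := fun z => k z / q z ^ 2 with hF
  have hFe : ∀ w : ℂ, w ≠ 0 → F w = G w / Complex.sin (π * w) ^ 2 := by
    intro w h
    simp only [hF, hk, hq, hG]
    rw [dslope_of_ne _ h, dslope_of_ne _ h, slope_def_field, slope_def_field, dslope_same, dslope_of_ne _ h, slope_def_field]
    simp only [mul_zero, Complex.sin_zero, sub_zero]
    by_cases hs : Complex.sin (π * w) = 0
    · simp [hs]
    field_simp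
  have hFd : ∀ S : Set ℂ, (∀ w ∈ S, |w.re| ≤ 1/2) → DifferentiableOn ℂ F S := by
    intro S hS
    have hSU : S ⊆ U := fun w hw => hsub w (hS w hw)
    exact (hkd.mono hSU).div ((hqd.mono hSU).pow 2) (fun w hw => pow_ne_zero _ (hq0 w (hS w hw)))
  -- growth of G
  obtain ⟨C', hC'0, m', hGb⟩ : ∃ C' : ℝ, 0 ≤ C' ∧ ∃ m' : ℕ, ∀ w : ℂ, |w.re| ≤ 1/2 → ‖G w‖ ≤ C' * (1 + |w.im|) ^ m' := by
    refine ⟨|C| + ‖g 0‖ + ‖deriv g 0‖, by positivity, m + 1, fun w hw => ?_⟩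
    have h1 : ‖g w‖ ≤ |C| * (1 + |w.im|) ^ (m+1) := by
      refine (hb w hw).trans ?_
      have : C ≤ |C| := le_abs_self C
      gcongr
      · linarith [abs_nonneg w.im]
      · omega
    have h2 : (1:ℝ) ≤ (1 + |w.im|) ^ (m+1) := one_le_pow₀ (by linarith [abs_nonneg w.im])
    have h3 : ‖w‖ ≤ (1 + |w.im|) ^ (m+1) := by
      have : ‖w‖ ≤ |w.re| + |w.im| := Complex.norm_le_abs_re_add_abs_im w
      have h4 : (1 + |w.im|) ≤ (1 + |w.im|) ^ (m+1) := le_self_pow₀ (by linarith [abs_nonneg w.im]) (by omega)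
      linarith
    calc ‖G w‖ ≤ ‖g w‖ + ‖g 0‖ + ‖deriv g 0‖ * ‖w‖ := by
          rw [hG, ← norm_mul]
          exact (norm_sub_le _ _).trans (by gcongr; exact norm_sub_le _ _)
      _ ≤ |C| * (1 + |w.im|) ^ (m+1) + ‖g 0‖ * (1 + |w.im|) ^ (m+1) + ‖deriv g 0‖ * (1 + |w.im|) ^ (m+1) := by
          gcongr
          nlinarith [norm_nonneg (g 0)]
      _ = _ := by ring
  -- rectangle
  have hrect : ∀ T : ℝ, (∫ x : ℝ in (-1/2:ℝ)..(1/2), F (x + (-T:ℝ) * Complex.I)) - (∫ x : ℝ in (-1/2:ℝ)..(1/2), F (x + T * Complex.I)) +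
      Complex.I • (∫ y : ℝ in (-T)..T, F ((1/2:ℝ) + y * Complex.I)) -
      Complex.I • (∫ y : ℝ in (-T)..T, F ((-1/2:ℝ) + y * Complex.I)) = 0 := by
    intro T
    have := Complex.integral_boundary_rect_eq_zero_of_differentiableOn F ⟨-1/2, -T⟩ ⟨1/2, T⟩ (hFd _ ?_)
    · exact this
    · intro w hw
      have := hw.1
      simp only [Set.mem_preimage, Set.uIcc_of_le (show (-1/2:ℝ) ≤ 1/2 by norm_num), Set.mem_Icc] at this
      rw [abs_le]; constructor <;> linarith [this.1, this.2]
  -- vertical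
  have hvp : ∀ y : ℝ, F ((1/2:ℝ) + y * Complex.I) = (2 / π : ℝ) * ((pdens y : ℂ) * G (1/2 + y * Complex.I)) := by
    intro y
    rw [hFe _ (by intro h; have := congrArg Complex.re h; norm_num at this)]
    have : Complex.sin (π * ((1/2:ℝ) + y * Complex.I)) = (Real.cosh (π * y) : ℝ) := by
      rw [show (π * ((1/2:ℝ) + y * Complex.I) : ℂ) = (π * y : ℝ) * Complex.I + π / 2 by push_cast; ring, Complex.sin_add_pi_div_two, Complex.cos_mul_I, Complex.ofReal_cosh]
    rw [this]
    have hc := (Real.cosh_pos (π * y)).ne'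
    have hc' : ((Real.cosh (π * y) : ℝ) : ℂ) ≠ 0 := by exact_mod_cast hc
    have hpi : (π : ℂ) ≠ 0 := by exact_mod_cast Real.pi_ne_zero
    unfold pdens
    simp only [Complex.ofReal_div, Complex.ofReal_pow, Complex.ofReal_ofNat, Complex.ofReal_one]
    field_simp
  have hvm : ∀ y : ℝ, F ((-1/2:ℝ) + y * Complex.I) = (2 / π : ℝ) * ((pdens y : ℂ) * G (-1/2 + y * Complex.I)) := by
    intro y
    rw [hFe _ (by intro h; have := congrArg Complex.re h; norm_num at this)]
    have : Complex.sin (π * ((-1/2:ℝ) + y * Complex.I)) = -(Real.cosh (π * y) : ℝ) := by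
      rw [show (π * ((-1/2:ℝ) + y * Complex.I) : ℂ) = (π * y : ℝ) * Complex.I - π / 2 by push_cast; ring, Complex.sin_sub_pi_div_two, Complex.cos_mul_I, Complex.ofReal_cosh]
    rw [this]
    have hc := (Real.cosh_pos (π * y)).ne'
    have hc' : ((Real.cosh (π * y) : ℝ) : ℂ) ≠ 0 := by exact_mod_cast hc
    have hpi : (π : ℂ) ≠ 0 := by exact_mod_cast Real.pi_ne_zero
    unfold pdens
    simp only [Complex.ofReal_div, Complex.ofReal_pow, Complex.ofReal_ofNat, Complex.ofReal_one, Complex.ofReal_neg]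
    field_simp
  have hgc : ∀ e : ℂ, |e.re| ≤ 1/2 → Continuous (fun s : ℝ => g (e + s * Complex.I)) := by
    intro e he
    rw [← continuousOn_univ]
    refine hg.continuousOn.comp (by fun_prop) (fun s _ => hsub _ (by simpa using he))
  have hGc : ∀ e : ℂ, |e.re| ≤ 1/2 → Continuous (fun s : ℝ => G (e + s * Complex.I)) := by
    intro e he
    have := hgc e he
    simp only [hG]
    exact (this.sub continuous_const).sub (by fun_prop)
  have hGi : ∀ e : ℂ, e.im = 0 → |e.re| ≤ 1/2 → Integrable (fun s : ℝ => (pdens s : ℂ) * G (e + s * Complex.I)) := by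
    intro e h1 he
    refine integrable_pdens_mul _ (hGc e he) C' m' (fun s => ?_)
    have := hGb (e + s * Complex.I) (by simpa using he)
    simpa [h1] using this
  have hG1 := hGi (1/2) (by norm_num) (by norm_num [abs_of_pos])
  have hG2 := hGi (-1/2) (by norm_num) (by norm_num [abs_div])
  have hlim : ∀ H : ℝ → ℂ, Integrable H → Tendsto (fun T : ℝ => ∫ y in (-T)..T, H y) atTop (𝓝 (∫ y, H y)) :=
    fun H hH => intervalIntegral_tendsto_integral hH tendsto_neg_atTop_atBot tendsto_id
  -- horizontal
  have hbound : ∀ T : ℝ, 1 ≤ |T| → ‖∫ x : ℝ in (-1/2:ℝ)..(1/2), F (x + T * Complex.I)‖ ≤ 2 * C' * ((1 + |T|) ^ m' / cosh (π * T)) := by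
    intro T hT
    have hcs := Real.cosh_sq (π * T)
    have hc1 := Real.one_le_cosh (π * T)
    have hsq : 1 ≤ sinh (π * T) ^ 2 := by
      have h1 : π * |T| ≤ sinh (π * |T|) := Real.self_le_sinh_iff.2 (by positivity)
      have h2 : sinh (π * |T|) ^ 2 = sinh (π * T) ^ 2 := by
        rcases abs_choice T with h | h <;> rw [h] <;> simp
      rw [← h2]
      have := Real.pi_gt_three
      have h4 : 1 ≤ sinh (π * |T|) := by nlinarith
      exact one_le_pow₀ h4
    have hsq2 : cosh (π * T) ≤ 2 * sinh (π * T) ^ 2 := by nlinarith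
    have : ∀ x ∈ Set.uIoc (-1/2:ℝ) (1/2), ‖F (x + T * Complex.I)‖ ≤ 2 * C' * ((1 + |T|) ^ m' / cosh (π * T)) := by
      intro x hx
      rw [Set.uIoc_of_le (by norm_num)] at hx
      have hxa : |x| ≤ 1/2 := by rw [abs_le]; constructor <;> linarith [hx.1, hx.2]
      have hT0 : T ≠ 0 := by rintro rfl; norm_num at hT
      rw [hFe _ (by intro h; have := congrArg Complex.im h; simp at this; exact hT0 this), norm_div, norm_pow]
      have h1 := norm_sin_ge (π * (x + T * Complex.I))
      have h2 := hGb (x + T * Complex.I) (by simpa using hxa)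
      simp at h1 h2
      have h3 : sinh (π * T) ^ 2 ≤ ‖Complex.sin (π * (x + T * Complex.I))‖ ^ 2 := by
        rw [← sq_abs]; gcongr
      rw [← mul_div_assoc, div_le_div_iff₀ (by linarith) (by linarith)]
      calc _ ≤ (C' * (1 + |T|) ^ m') * (2 * ‖Complex.sin (π * (x + T * Complex.I))‖ ^ 2) := by
            gcongr; linarith
        _ = _ := by ring
    have := intervalIntegral.norm_integral_le_of_norm_le_const this
    norm_num at this ⊢
    exact this
  have hz : Tendsto (fun T : ℝ => 2 * C' * ((1 + |T|) ^ m' / cosh (π * T))) atTop (𝓝 0) := by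
    obtain ⟨D, hD, hDb⟩ := pow_div_cosh_le m'
    have h1 : Tendsto (fun T : ℝ => 2 * C' * (D * (1 + T ^ 2)⁻¹)) atTop (𝓝 (2 * C' * (D * 0))) := by
      refine ((Tendsto.inv_tendsto_atTop ?_).const_mul D).const_mul _
      exact tendsto_atTop_add_const_left _ _ (tendsto_pow_atTop two_ne_zero)
    simp only [mul_zero] at h1
    refine squeeze_zero (fun T => ?_) (fun T => ?_) h1
    · have := Real.cosh_pos (π * T); positivity
    · gcongr; exact hDb T
  have hh1 : Tendsto (fun T : ℝ => ∫ x : ℝ in (-1/2:ℝ)..(1/2), F (x + T * Complex.I)) atTop (𝓝 0) := by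
    refine squeeze_zero_norm' ?_ hz
    filter_upwards [eventually_ge_atTop 1] with T hT
    exact hbound T (hT.trans (le_abs_self T))
  have hh2 : Tendsto (fun T : ℝ => ∫ x : ℝ in (-1/2:ℝ)..(1/2), F (x + (-T:ℝ) * Complex.I)) atTop (𝓝 0) := by
    refine squeeze_zero_norm' ?_ hz
    filter_upwards [eventually_ge_atTop 1] with T hT
    have := hbound (-T) (by rw [abs_neg]; exact hT.trans (le_abs_self T))
    simpa using this
  have hv1 := hlim _ (hG1.const_mul ((2 / π : ℝ) : ℂ))
  have hv2 := hlim _ (hG2.const_mul ((2 / π : ℝ) : ℂ))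
  simp only [← hvp, ← hvm] at hv1 hv2
  have htot := (((hh2.sub hh1).add (hv1.const_smul Complex.I)).sub (hv2.const_smul Complex.I))
  have huniq := tendsto_nhds_unique (htot.congr hrect) tendsto_const_nhds
  simp only [hvp, hvm, integral_const_mul, sub_self, zero_add, smul_eq_mul] at huniq
  have hpi : ((2 / π : ℝ) : ℂ) ≠ 0 := by
    have := Real.pi_pos
    exact_mod_cast (by positivity : (2/π:ℝ) ≠ 0)
  have hGG : ∫ s : ℝ, (pdens s : ℂ) * G (1/2 + s * Complex.I) = ∫ s : ℝ, (pdens s : ℂ) * G (-1/2 + s * Complex.I) := by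
    rw [← mul_sub, ← mul_sub] at huniq
    have := (mul_eq_zero.1 huniq).resolve_left Complex.I_ne_zero
    exact sub_eq_zero.1 ((mul_eq_zero.1 this).resolve_left hpi)
  have hpc : Integrable (fun s : ℝ => (pdens s : ℂ) * deriv g 0) := (integrable_pdens.ofReal).mul_const _
  calc _ = ∫ s : ℝ, (((pdens s : ℂ) * G (1/2 + s * Complex.I) - (pdens s : ℂ) * G (-1/2 + s * Complex.I)) + (pdens s : ℂ) * deriv g 0) := by
        congr 1; ext s; simp only [hG]; ring
    _ = deriv g 0 := by
        rw [integral_add (f := fun s : ℝ => (pdens s : ℂ) * G (1/2 + s * Complex.I) - (pdens s : ℂ) * G (-1/2 + s * Complex.I)) (hG1.sub hG2) hpc, integral_sub hG1 hG2, hGG, sub_self, zero_add, integral_mul_const, integral_complex_ofReal, integral_pdens]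
        simp

lemma contour (c : ℝ) (g : ℂ → ℂ) (U : Set ℂ) (hU : IsOpen U)
    (hsub : ∀ w : ℂ, |w.re - c| ≤ 1/2 → w ∈ U) (hg : DifferentiableOn ℂ g U) (C : ℝ) (m : ℕ)
    (hb : ∀ w : ℂ, |w.re - c| ≤ 1/2 → ‖g w‖ ≤ C * (1 + |w.im|) ^ m) :
    ∫ s : ℝ, (pdens s : ℂ) * (g (c + 1/2 + s * Complex.I) - g (c - 1/2 + s * Complex.I)) = deriv g c := by
  have := contour_zero (fun w => g (c + w)) ((fun w => (c:ℂ) + w) ⁻¹' U) (hU.preimage (by fun_prop))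
    (fun w hw => hsub _ (by simpa using hw)) (hg.comp (by fun_prop) (fun w hw => hw)) C m
    (fun w hw => by simpa using hb (c + w) (by simpa using hw))
  rw [deriv_comp_const_add, add_zero] at this
  rw [← this]
  congr 1; ext s
  congr 3 <;> ring

noncomputable def Zf (f s : ℝ) : ℂ := ((f - 1/2 : ℝ) : ℂ) - s * Complex.I

lemma Zf_re (f s : ℝ) : (Zf f s).re = f - 1/2 := by simp [Zf]

lemma Zf_im (f s : ℝ) : (Zf f s).im = - s := by simp [Zf]

lemma continuous_Zf (f : ℝ) : Continuous (Zf f) := by unfold Zf; fun_prop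

lemma norm_Zf_le (f s : ℝ) : ‖Zf f s‖ ≤ (|f| + 1) * (1 + |s|) := by
  have := Complex.norm_le_abs_re_add_abs_im (Zf f s)
  rw [Zf_re, Zf_im, abs_neg] at this
  have h2 : |f - 1/2| ≤ |f| + 1/2 := by
    have := abs_sub f (1/2)
    norm_num at this ⊢; linarith
  nlinarith [abs_nonneg f, abs_nonneg s, mul_nonneg (abs_nonneg f) (abs_nonneg s)]

lemma norm_Zf_pow_le (f s : ℝ) (n : ℕ) : ‖Zf f s ^ n‖ ≤ (|f| + 1) ^ n * (1 + |s|) ^ n := by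
  rw [norm_pow, ← mul_pow]
  exact pow_le_pow_left₀ (norm_nonneg _) (norm_Zf_le f s) n

lemma integrable_Zf_pow (f : ℝ) (n : ℕ) : Integrable (fun s : ℝ => (pdens s : ℂ) * Zf f s ^ n) :=
  integrable_pdens_mul _ ((continuous_Zf f).pow n) _ n (fun s => norm_Zf_pow_le f s n)

lemma moment_rec (n : ℕ) : ∑ k ∈ Finset.range n, ((n.choose k : ℕ) : ℂ) * (∫ s : ℝ, (pdens s : ℂ) * Zf 0 s ^ k)
    = if n = 1 then 1 else 0 := by
  have h := contour_zero (fun w => (-w) ^ n) Set.univ isOpen_univ (fun _ _ => trivial)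
    (by fun_prop) 1 n (fun w hw => by
      rw [norm_pow, norm_neg, one_mul]
      refine pow_le_pow_left₀ (norm_nonneg _) ?_ n
      have := Complex.norm_le_abs_re_add_abs_im w
      linarith)
  have h1 : ∀ s : ℝ, (pdens s : ℂ) * ((-(1/2 + s * Complex.I)) ^ n - (-(-1/2 + s * Complex.I)) ^ n)
      = - ∑ k ∈ Finset.range n, ((n.choose k : ℕ) : ℂ) * ((pdens s : ℂ) * Zf 0 s ^ k) := by
    intro s
    have e1 : (-(1/2 + s * Complex.I)) = Zf 0 s := by simp [Zf]; ring
    have e2 : (-(-1/2 + s * Complex.I)) = Zf 0 s + 1 := by simp [Zf]; ring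
    rw [e1, e2, add_pow, Finset.sum_range_succ]
    simp only [one_pow, mul_one, Nat.choose_self, Nat.cast_one]
    rw [sub_add_cancel_right, mul_neg, Finset.mul_sum]
    congr 1
    refine Finset.sum_congr rfl fun k _ => by ring
  simp only [h1] at h
  rw [integral_neg, integral_finsetSum _ (fun k _ => (integrable_Zf_pow 0 k).const_mul _)] at h
  simp only [integral_const_mul] at h
  rw [neg_eq_iff_eq_neg] at h
  rw [h]
  have hd : HasDerivAt (fun w : ℂ => (-w) ^ n) (n * (-0) ^ (n - 1) * (-1)) 0 :=
    ((hasDerivAt_id (0:ℂ)).neg).pow n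
  rw [hd.deriv]
  rcases n with _ | _ | n
  · simp
  · simp
  · simp

lemma moment_zero (n : ℕ) : ∫ s : ℝ, (pdens s : ℂ) * Zf 0 s ^ n = ((bernoulli n : ℚ) : ℂ) := by
  induction n using Nat.strong_induction_on with
  | _ n ih =>
    have h1 := moment_rec (n+1)
    have h2 := congrArg (fun q : ℚ => (q : ℂ)) (sum_bernoulli (n+1))
    rw [Finset.sum_range_succ] at h1 h2
    push_cast at h2
    rw [Finset.sum_congr rfl (fun k hk => by rw [ih k (Finset.mem_range.1 hk)])] at h1
    have h3 : (if n + 1 = 1 then (1:ℂ) else 0) = (((if n + 1 = 1 then (1:ℚ) else 0) : ℚ) : ℂ) := by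
      split_ifs <;> simp
    rw [h3] at h1
    push_cast at h1
    have h4 := h1.trans h2.symm
    have h5 := add_left_cancel h4
    refine mul_left_cancel₀ ?_ h5
    rw [Nat.choose_succ_self_right]
    exact_mod_cast Nat.succ_ne_zero n

lemma moment (f : ℝ) (n : ℕ) : ∫ s : ℝ, (pdens s : ℂ) * Zf f s ^ n = (bernPoly n f : ℂ) := by
  have h1 : ∀ s : ℝ, (pdens s : ℂ) * Zf f s ^ n
      = ∑ k ∈ Finset.range (n+1), ((n.choose k : ℕ) : ℂ) * (f:ℂ) ^ (n - k) * ((pdens s : ℂ) * Zf 0 s ^ k) := by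
    intro s
    have e1 : Zf f s = Zf 0 s + f := by simp [Zf]; ring
    rw [e1, add_pow, Finset.mul_sum]
    refine Finset.sum_congr rfl fun k _ => by ring
  simp only [h1]
  rw [integral_finsetSum _ (fun k _ => (integrable_Zf_pow 0 k).const_mul _)]
  simp only [integral_const_mul, moment_zero]
  unfold bernPoly
  push_cast
  refine Finset.sum_congr rfl fun k _ => by ring

noncomputable def Hf (w : ℂ) : ℂ := w * Complex.log w - w

lemma hasDerivAt_Hf (w : ℂ) (hw : 0 < w.re) : HasDerivAt Hf (Complex.log w) w := by
  have hw0 : w ≠ 0 := by rintro rfl; simp at hw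
  have := ((hasDerivAt_id w).mul (Complex.hasDerivAt_log (Or.inl hw))).sub (hasDerivAt_id w)
  refine this.congr_deriv ?_
  simp [hw0]

lemma norm_Hf_le (K : ℝ) (w : ℂ) (h1 : 1/2 ≤ w.re) (h2 : w.re ≤ K) :
    ‖Hf w‖ ≤ ((K + 1) * (K + 7)) * (1 + |w.im|) ^ 2 := by
  have hn : 1/2 ≤ ‖w‖ := h1.trans (Complex.re_le_norm w)
  have hl : ‖Complex.log w‖ ≤ ‖w‖ + 5 := by
    have a1 := Complex.norm_le_abs_re_add_abs_im (Complex.log w)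
    rw [Complex.log_re, Complex.log_im] at a1
    have a2 := Complex.abs_arg_le_pi w
    have a3 := Real.pi_lt_four
    have a4 : |Real.log ‖w‖| ≤ ‖w‖ + 1 := by
      rw [abs_le]
      constructor
      · have := Real.one_sub_inv_le_log_of_pos (show 0 < ‖w‖ by linarith)
        have h3 : ‖w‖⁻¹ ≤ 2 := by
          rw [inv_le_comm₀ (by linarith) (by norm_num)]; linarith
        linarith
      · have := Real.log_le_sub_one_of_pos (show 0 < ‖w‖ by linarith)
        linarith
    linarith
  have hw : ‖w‖ ≤ (K + 1/2) * (1 + |w.im|) := by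
    have := Complex.norm_le_abs_re_add_abs_im w
    rw [abs_of_nonneg (by linarith : 0 ≤ w.re)] at this
    nlinarith [abs_nonneg w.im]
  have hK : 0 ≤ K := by linarith
  calc ‖Hf w‖ ≤ ‖w‖ * ‖Complex.log w‖ + ‖w‖ := by
        rw [← norm_mul]; exact norm_sub_le _ _
    _ ≤ ‖w‖ * (‖w‖ + 5) + ‖w‖ := by gcongr
    _ = ‖w‖ * (‖w‖ + 6) := by ring
    _ ≤ ((K + 1) * (1 + |w.im|)) * ((K + 7) * (1 + |w.im|)) := by
        have := abs_nonneg w.im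
        gcongr <;> nlinarith
    _ = _ := by ring

lemma taylor (x : ℝ) (hx : 0 < x) (z : ℂ) (hz : z.re < x) :
    z ^ 2 * (∫ t in (0:ℝ)..1, (1 - (t:ℂ)) / (x - t * z)) = Hf (x - z) - Hf x + z * Complex.log x := by
  have hre : ∀ t ∈ Set.Icc (0:ℝ) 1, 0 < ((x:ℂ) - t * z).re := by
    intro t ht
    simp
    rcases le_or_gt z.re 0 with h | h
    · nlinarith [ht.1]
    · nlinarith [ht.2]
  have hne : ∀ t ∈ Set.Icc (0:ℝ) 1, ((x:ℂ) - t * z) ≠ 0 := by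
    intro t ht h
    have := hre t ht
    rw [h] at this; simp at this
  have hd : ∀ t ∈ Set.uIcc (0:ℝ) 1, HasDerivAt (fun t : ℝ => (1 - (t:ℂ)) * z * (-Complex.log (x - t * z)) + Hf (x - t * z))
      (z ^ 2 * ((1 - (t:ℂ)) / (x - t * z))) t := by
    intro t ht
    rw [Set.uIcc_of_le zero_le_one] at ht
    have h0 : HasDerivAt (fun t : ℝ => (t:ℂ)) 1 t := Complex.ofRealCLM.hasDerivAt
    have h1 : HasDerivAt (fun t : ℝ => (x:ℂ) - t * z) (-(1 * z)) t := (h0.mul_const z).const_sub _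
    have h2 := (Complex.hasDerivAt_log (z := (x:ℂ) - t * z) (Or.inl (hre t ht))).comp t h1
    have h3 := (hasDerivAt_Hf ((x:ℂ) - t * z) (hre t ht)).comp t h1
    have h4 := (((h0.const_sub 1).mul_const z).mul h2.neg).add h3
    refine h4.congr_deriv ?_
    have := hne t ht
    simp only [Function.comp, Pi.neg_apply]
    field_simp
    ring
  have hint := intervalIntegral.integral_eq_sub_of_hasDerivAt hd (by
    apply ContinuousOn.intervalIntegrable
    rw [Set.uIcc_of_le zero_le_one]
    refine continuousOn_const.mul (ContinuousOn.div (by fun_prop) (by fun_prop) hne))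
  rw [intervalIntegral.integral_const_mul] at hint
  rw [hint]
  simp
  ring

lemma continuous_Hf_comp (x f : ℝ) (hf : f ≤ x) : Continuous (fun s : ℝ => Hf (x - Zf f s)) := by
  rw [continuous_iff_continuousAt]
  intro s
  have : 0 < ((x:ℂ) - Zf f s).re := by
    rw [Complex.sub_re, Zf_re]; simp; linarith
  exact ContinuousAt.comp (f := fun s : ℝ => (x:ℂ) - Zf f s) (hasDerivAt_Hf _ this).continuousAt (by have := continuous_Zf f; fun_prop)

lemma integrable_Hf_comp (x f : ℝ) (hf : f ≤ x) : Integrable (fun s : ℝ => (pdens s : ℂ) * Hf (x - Zf f s)) := by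
  refine integrable_pdens_mul _ (continuous_Hf_comp x f hf) (((x - f + 1/2) + 1) * ((x - f + 1/2) + 7)) 2 (fun s => ?_)
  have := norm_Hf_le (x - f + 1/2) (x - Zf f s) (by rw [Complex.sub_re, Zf_re, Complex.ofReal_re]; linarith) (by rw [Complex.sub_re, Zf_re, Complex.ofReal_re]; linarith)
  refine this.trans_eq ?_
  rw [Complex.sub_im, Zf_im]; simp

lemma rho_eq (x f : ℝ) (hx : 0 < x) (hf : f ≤ x) :
    ∫ s : ℝ, (pdens s : ℂ) * (Zf f s ^ 2 * ∫ t in (0:ℝ)..1, (1 - (t:ℂ)) / (x - t * Zf f s))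
      = (∫ s : ℝ, (pdens s : ℂ) * Hf (x - Zf f s)) - Hf x + bernPoly 1 f * Complex.log x := by
  have h1 : ∀ s : ℝ, (pdens s : ℂ) * (Zf f s ^ 2 * ∫ t in (0:ℝ)..1, (1 - (t:ℂ)) / (x - t * Zf f s))
     = ((pdens s : ℂ) * Hf (x - Zf f s) - (pdens s : ℂ) * Zf f s ^ 0 * Hf x) + (pdens s : ℂ) * Zf f s ^ 1 * Complex.log x := by
    intro s
    rw [taylor x hx _ (by rw [Zf_re]; linarith)]; ring
  simp only [h1]
  have i1 := integrable_Hf_comp x f hf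
  have i2 := (integrable_Zf_pow f 0).mul_const (Hf x)
  have i3 := (integrable_Zf_pow f 1).mul_const (Complex.log x)
  rw [integral_add (f := fun s : ℝ => (pdens s : ℂ) * Hf (x - Zf f s) - (pdens s : ℂ) * Zf f s ^ 0 * Hf x) (i1.sub i2) i3, integral_sub i1 i2, integral_mul_const, integral_mul_const,
    moment, moment]
  simp [bernPoly]

noncomputable def Af (n : ℕ) : ℂ := ∫ s : ℝ, (pdens s : ℂ) * Hf (n - Zf 0 s)

lemma Af_succ (n : ℕ) : Af (n+1) = Af n + Complex.log ((n+1 : ℕ) : ℂ) := by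
  have hsub : ∀ w : ℂ, |w.re - ((n:ℝ)+1)| ≤ 1/2 → 1/2 ≤ w.re ∧ w.re ≤ n + 2 := by
    intro w hw
    rw [abs_le] at hw
    have : (0:ℝ) ≤ n := n.cast_nonneg
    constructor <;> linarith [hw.1, hw.2]
  have h := contour ((n:ℝ)+1) Hf {w | 0 < w.re} (isOpen_lt continuous_const Complex.continuous_re)
    (fun w hw => by have := (hsub w hw).1; simp only [Set.mem_setOf_eq]; linarith)
    (fun w hw => (hasDerivAt_Hf w hw).differentiableAt.differentiableWithinAt) _ 2
    (fun w hw => norm_Hf_le (n+2) w (hsub w hw).1 (hsub w hw).2)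
  rw [(hasDerivAt_Hf _ (by simp; positivity)).deriv] at h
  have i1 := integrable_Hf_comp ((n+1:ℕ):ℝ) 0 (by positivity)
  have i2 := integrable_Hf_comp (n:ℝ) 0 (by positivity)
  have h2 : Af (n+1) - Af n = Complex.log ((n+1 : ℕ) : ℂ) := by
    unfold Af
    simp only [Complex.ofReal_natCast] at i1 i2
    rw [← integral_sub i1 i2]
    have : Complex.log ((n+1 : ℕ) : ℂ) = Complex.log (((n:ℝ)+1 : ℝ) : ℂ) := by push_cast; rfl
    rw [this, ← h]
    congr 1; ext s
    rw [← mul_sub]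
    congr 3 <;> simp [Zf] <;> ring
  linear_combination h2

lemma Af_eq (n : ℕ) : Af n = Af 0 + ((∑ k ∈ Finset.Icc 1 n, Real.log k : ℝ) : ℂ) := by
  induction n with
  | zero => simp
  | succ n ih =>
    rw [Af_succ, ih, Finset.sum_Icc_succ_top (by omega)]
    push_cast
    rw [Complex.ofReal_log (by positivity)]
    push_cast
    ring

lemma rho_tendsto : Tendsto (fun n : ℕ => ∫ s : ℝ, (pdens s : ℂ) * (Zf 0 s ^ 2 * ∫ t in (0:ℝ)..1, (1 - (t:ℂ)) / ((n:ℝ) - t * Zf 0 s)))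
    atTop (𝓝 0) := by
  set K : ℝ := ∫ s : ℝ, ‖(pdens s : ℂ) * Zf 0 s ^ 2‖
  have hb : ∀ n : ℕ, 1 ≤ n → ‖∫ s : ℝ, (pdens s : ℂ) * (Zf 0 s ^ 2 * ∫ t in (0:ℝ)..1, (1 - (t:ℂ)) / ((n:ℝ) - t * Zf 0 s))‖ ≤ K * (1 / n) := by
    intro n hn
    have hn' : (0:ℝ) < n := by exact_mod_cast hn
    rw [← integral_mul_const]
    refine norm_integral_le_of_norm_le ((integrable_Zf_pow 0 2).norm.mul_const _) (Eventually.of_forall fun s => ?_)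
    rw [← mul_assoc, norm_mul]
    gcongr
    have : ∀ t ∈ Set.uIoc (0:ℝ) 1, ‖(1 - (t:ℂ)) / ((n:ℝ) - t * Zf 0 s)‖ ≤ 1 / n := by
      intro t ht
      rw [Set.uIoc_of_le zero_le_one] at ht
      rw [norm_div]
      have h1 : ‖1 - (t:ℂ)‖ ≤ 1 := by
        rw [← Complex.ofReal_one, ← Complex.ofReal_sub, Complex.norm_real, Real.norm_eq_abs, abs_le]
        constructor <;> linarith [ht.1, ht.2]
      have h2 : (n:ℝ) ≤ ‖((n:ℝ):ℂ) - t * Zf 0 s‖ := by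
        refine le_trans ?_ (Complex.re_le_norm _)
        simp [Zf_re]; linarith [ht.1]
      gcongr
    have := intervalIntegral.norm_integral_le_of_norm_le_const this
    simpa using this
  have hz : Tendsto (fun n : ℕ => K * (1 / (n:ℝ))) atTop (𝓝 0) := by
    simpa using (tendsto_one_div_atTop_nhds_zero_nat (𝕜 := ℝ)).const_mul K
  refine squeeze_zero_norm' ?_ hz
  filter_upwards [eventually_ge_atTop 1] with n hn
  exact hb n hn

lemma Af_zero : Af 0 = ((-(1/2 * Real.log (2 * π)) : ℝ) : ℂ) := by
  have hs : Tendsto (fun n : ℕ => (((∑ k ∈ Finset.Icc 1 n, Real.log k) - ((n:ℝ) * Real.log n - n + 1/2 * Real.log n) : ℝ) : ℂ)) atTop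
      (𝓝 ((1/2 * Real.log (2 * π) : ℝ) : ℂ)) := by
    refine (Complex.continuous_ofReal.tendsto _).comp ?_
    have h1 := ((Real.continuousAt_log (by positivity : √π ≠ 0)).tendsto.comp Stirling.tendsto_stirlingSeq_sqrt_pi).add_const (1/2 * Real.log 2)
    have e : Real.log √π + 1/2 * Real.log 2 = 1/2 * Real.log (2 * π) := by
      rw [Real.log_sqrt Real.pi_pos.le, Real.log_mul (by norm_num) Real.pi_ne_zero]; ring
    rw [e] at h1
    refine h1.congr' ?_
    filter_upwards [eventually_ge_atTop 1] with n hn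
    have hn' : (0:ℝ) < n := by exact_mod_cast hn
    have hf : Real.log (n.factorial : ℝ) = ∑ k ∈ Finset.Icc 1 n, Real.log k := by
      clear hn hn'
      induction n with
      | zero => simp
      | succ n ih =>
        rw [Finset.sum_Icc_succ_top (by omega), ← ih, Nat.factorial_succ, Nat.cast_mul,
          Real.log_mul (by positivity) (by positivity)]
        ring
    simp only [Function.comp]
    rw [Stirling.log_stirlingSeq_formula, hf, Real.log_mul (by norm_num) hn'.ne', Real.log_div hn'.ne' (Real.exp_ne_zero _), Real.log_exp]
    ring
  have hr := rho_tendsto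
  have h2 := hr.sub hs
  have h3 : ∀ᶠ n : ℕ in atTop, (∫ s : ℝ, (pdens s : ℂ) * (Zf 0 s ^ 2 * ∫ t in (0:ℝ)..1, (1 - (t:ℂ)) / ((n:ℝ) - t * Zf 0 s)))
      - (((∑ k ∈ Finset.Icc 1 n, Real.log k) - ((n:ℝ) * Real.log n - n + 1/2 * Real.log n) : ℝ) : ℂ) = Af 0 := by
    filter_upwards [eventually_ge_atTop 1] with n hn
    have hn' : (0:ℝ) < n := by exact_mod_cast hn
    rw [rho_eq n 0 hn' hn'.le]
    have : ∫ s : ℝ, (pdens s : ℂ) * Hf (((n:ℝ):ℂ) - Zf 0 s) = Af n := by simp [Af]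
    rw [this, Af_eq, Hf, ← Complex.ofReal_log hn'.le]
    have hb : bernPoly 1 0 = -1/2 := by simp [bernPoly, Finset.sum_range_succ]
    rw [hb]
    push_cast
    ring
  have := tendsto_nhds_unique (tendsto_const_nhds.congr' (h3.mono fun n h => h.symm)) h2
  rw [this]; simp

lemma Af_val (n : ℕ) : Af n = ((∑ k ∈ Finset.Icc 1 n, Real.log k - 1/2 * Real.log (2 * π) : ℝ) : ℂ) := by
  rw [Af_eq, Af_zero]; push_cast; ring

lemma stirling_gt (k : ℕ) : ∀ l, k < l → stirling1Unsigned k l = 0 := by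
  induction k with
  | zero => intro l hl; obtain ⟨l, rfl⟩ := Nat.exists_eq_succ_of_ne_zero hl.ne'; rfl
  | succ k ih =>
    intro l hl
    obtain ⟨l, rfl⟩ := Nat.exists_eq_succ_of_ne_zero (by omega : l ≠ 0)
    simp only [stirling1Unsigned]
    rw [ih l (by omega), ih (l+1) (by omega)]; simp

lemma stirling_zero (k : ℕ) : stirling1Unsigned (k+1) 0 = 0 := by
  induction k with
  | zero => simp [stirling1Unsigned]
  | succ k ih => rw [stirling1Unsigned, ih]; simp

lemma stirling_prod (k : ℕ) (y : ℂ) :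
    ∑ l ∈ Finset.range (k+1), (stirling1Unsigned (k+1) (l+1) : ℂ) * y ^ l = ∏ i ∈ Finset.range k, (y + i + 1) := by
  induction k with
  | zero => simp [stirling1Unsigned]
  | succ k ih =>
    have h1 : ∀ l, (stirling1Unsigned (k+1+1) (l+1) : ℂ) * y ^ l
        = (stirling1Unsigned (k+1) l : ℂ) * y ^ l + (k+1) * ((stirling1Unsigned (k+1) (l+1) : ℂ) * y ^ l) := by
      intro l
      rw [stirling1Unsigned]; push_cast; ring
    simp only [h1]
    rw [Finset.sum_add_distrib, ← Finset.mul_sum]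
    have h2 : ∑ l ∈ Finset.range (k+1+1), (stirling1Unsigned (k+1) l : ℂ) * y ^ l
        = y * ∑ l ∈ Finset.range (k+1), (stirling1Unsigned (k+1) (l+1) : ℂ) * y ^ l := by
      rw [Finset.sum_range_succ', stirling_zero, Finset.mul_sum]
      simp only [Nat.cast_zero, zero_mul, add_zero]
      refine Finset.sum_congr rfl fun l _ => by ring
    have h3 : ∑ l ∈ Finset.range (k+1+1), (stirling1Unsigned (k+1) (l+1) : ℂ) * y ^ l
        = ∑ l ∈ Finset.range (k+1), (stirling1Unsigned (k+1) (l+1) : ℂ) * y ^ l := by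
      rw [Finset.sum_range_succ, stirling_gt (k+1) (k+1+1) (by omega)]
      simp
    rw [h2, h3, ih, Finset.prod_range_succ]
    ring

lemma sinh_le_mul_cosh (u : ℝ) (hu : 0 ≤ u) : sinh u ≤ u * cosh u := by
  rcases hu.eq_or_lt with rfl | h
  · simp
  obtain ⟨c, hc, he⟩ := exists_deriv_eq_slope sinh h Real.continuous_sinh.continuousOn Real.differentiable_sinh.differentiableOn
  rw [Real.deriv_sinh, Real.sinh_zero, sub_zero, sub_zero, eq_div_iff h.ne'] at he
  rw [← he, mul_comm]
  gcongr
  rw [Real.cosh_le_cosh, abs_of_pos hc.1, abs_of_pos h]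
  exact hc.2.le

lemma euler_bound (s : ℝ) (k : ℕ) : ∏ i ∈ Finset.range k, (1 + s ^ 2 / ((i:ℝ) + 1) ^ 2) ≤ cosh (π * s) := by
  wlog hs : 0 ≤ s generalizing s
  · have := this (-s) (by linarith)
    simpa using this
  rcases hs.eq_or_lt with rfl | h
  · simp
  have h1 := Complex.tendsto_euler_sin_prod (s * Complex.I)
  have h2 : Tendsto (fun n : ℕ => π * s * ∏ i ∈ Finset.range n, (1 + s ^ 2 / ((i:ℝ) + 1) ^ 2)) atTop (𝓝 (sinh (π * s))) := by
    have h3 := (Complex.continuous_im.tendsto _).comp h1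
    have e1 : (Complex.sin (π * (s * Complex.I))).im = sinh (π * s) := by
      rw [← mul_assoc, Complex.sin_mul_I, ← Complex.ofReal_mul, ← Complex.ofReal_sinh, Complex.im_ofReal_mul, Complex.I_im, mul_one]
    rw [e1] at h3
    refine h3.congr fun n => ?_
    simp only [Function.comp]
    have e2 : (∏ j ∈ Finset.range n, ((1 : ℂ) - (s * Complex.I) ^ 2 / ((j:ℂ) + 1) ^ 2))
       = ((∏ i ∈ Finset.range n, (1 + s ^ 2 / ((i:ℝ) + 1) ^ 2) : ℝ) : ℂ) := by
      push_cast
      refine Finset.prod_congr rfl fun j _ => ?_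
      rw [mul_pow, Complex.I_sq]; ring
    rw [e2, show (π * (s * Complex.I) : ℂ) = ((π * s : ℝ) : ℂ) * Complex.I by push_cast; ring]
    rw [mul_right_comm, ← Complex.ofReal_mul, Complex.im_ofReal_mul, Complex.I_im, mul_one]
  have hmono : Monotone (fun n : ℕ => π * s * ∏ i ∈ Finset.range n, (1 + s ^ 2 / ((i:ℝ) + 1) ^ 2)) := by
    refine monotone_nat_of_le_succ fun n => ?_
    rw [Finset.prod_range_succ]
    have hp : 0 ≤ ∏ i ∈ Finset.range n, (1 + s ^ 2 / ((i:ℝ) + 1) ^ 2) := Finset.prod_nonneg fun i _ => by positivity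
    have := Real.pi_pos
    gcongr
    refine le_mul_of_one_le_right hp ?_
    have : 0 ≤ s ^ 2 / ((n:ℝ) + 1) ^ 2 := by positivity
    linarith
  have h3 := hmono.ge_of_tendsto h2 k
  have h4 := sinh_le_mul_cosh (π * s) (by positivity)
  exact le_of_mul_le_mul_left (h3.trans h4) (by positivity)

/-- inverse factorial term -/
noncomputable def Qf (x : ℝ) (k : ℕ) (y : ℂ) : ℂ := (∏ i ∈ Finset.range k, (y + i + 1)) / (risingProdR x (k+1) : ℂ)

noncomputable def qf (x σ : ℝ) (k : ℕ) : ℝ := (∏ i ∈ Finset.range k, (σ + i + 1)) / risingProdR x (k+1)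

noncomputable def rf (x σ : ℝ) (k : ℕ) : ℝ := (∏ i ∈ Finset.range k, (σ + i + 1)) / risingProdR x k

lemma rising_pos (x : ℝ) (hx : 0 < x) (k : ℕ) : 0 < risingProdR x k :=
  Finset.prod_pos fun i _ => by positivity

lemma rising_succ (x : ℝ) (k : ℕ) : risingProdR x (k+1) = risingProdR x k * (x + k + 1) := by
  unfold risingProdR; rw [Finset.prod_range_succ]

lemma qf_nonneg (x σ : ℝ) (hx : 0 < x) (hσ : 0 ≤ σ) (k : ℕ) : 0 ≤ qf x σ k :=
  div_nonneg (Finset.prod_nonneg fun i _ => by positivity) (rising_pos x hx _).le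

lemma rf_nonneg (x σ : ℝ) (hx : 0 < x) (hσ : 0 ≤ σ) (k : ℕ) : 0 ≤ rf x σ k :=
  div_nonneg (Finset.prod_nonneg fun i _ => by positivity) (rising_pos x hx _).le

lemma rf_tendsto (x σ : ℝ) (hx : 0 < x) (hσ : 0 ≤ σ) (h : σ < x) : Tendsto (rf x σ) atTop (𝓝 0) := by
  have hb : ∀ n, rf x σ n ≤ rexp (-((x - σ) / (x + 1) * ∑ i ∈ Finset.range n, 1 / ((i:ℝ) + 1))) := by
    intro n
    unfold rf risingProdR
    rw [← Finset.prod_div_distrib, Finset.mul_sum, ← Finset.sum_neg_distrib, Real.exp_sum]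
    refine Finset.prod_le_prod (fun i _ => by positivity) fun i _ => ?_
    refine le_trans ?_ (Real.add_one_le_exp _)
    have hi : (0:ℝ) ≤ i := i.cast_nonneg
    rw [div_mul_div_comm, mul_one, div_le_iff₀ (by positivity), ← sub_nonneg]
    have : (-((x - σ) / ((x + 1) * ((i:ℝ) + 1))) + 1) * (x + i + 1) - (σ + i + 1)
      = (x - σ) * (x * i) / ((x + 1) * (i + 1)) := by field_simp; ring
    rw [this]
    have : 0 < x - σ := by linarith
    positivity
  refine squeeze_zero (rf_nonneg x σ hx hσ) hb ?_
  refine Real.tendsto_exp_neg_atTop_nhds_zero.comp ?_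
  exact Real.tendsto_sum_range_one_div_nat_succ_atTop.const_mul_atTop (div_pos (by linarith) (by linarith))

lemma qf_summable (x σ : ℝ) (hx : 0 < x) (hσ : 0 ≤ σ) (h : σ < x) : Summable (qf x σ) := by
  refine summable_of_sum_range_le (c := 1 / (x - σ)) (qf_nonneg x σ hx hσ) fun n => ?_
  have : ∑ i ∈ Finset.range n, qf x σ i = (1 - rf x σ n) / (x - σ) := by
    have hne : x - σ ≠ 0 := by linarith
    induction n with
    | zero => simp [rf, risingProdR]
    | succ n ih =>
      rw [Finset.sum_range_succ, ih]
      unfold qf rf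
      rw [rising_succ, Finset.prod_range_succ]
      have := (rising_pos x hx n).ne'
      have : x + n + 1 ≠ 0 := by positivity
      field_simp
      ring
  rw [this]
  have := rf_nonneg x σ hx hσ n
  have : 0 < x - σ := by linarith
  gcongr; linarith

lemma norm_risingprod_le (σ s : ℝ) (hσ : 0 ≤ σ) (y : ℂ) (h1 : -1/2 ≤ y.re) (h2 : y.re ≤ σ) (h3 : |y.im| ≤ |s|) (k : ℕ) :
    ‖∏ i ∈ Finset.range k, (y + i + 1)‖ ≤ cosh (π * s) * ∏ i ∈ Finset.range k, (σ + i + 1) := by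
  have hp : 0 ≤ ∏ i ∈ Finset.range k, (σ + i + 1) := Finset.prod_nonneg fun i _ => by positivity
  refine le_trans ?_ (mul_le_mul_of_nonneg_right (euler_bound s k) hp)
  rw [norm_prod, ← Finset.prod_mul_distrib]
  refine Finset.prod_le_prod (fun i _ => norm_nonneg _) fun i _ => ?_
  have hi : (0:ℝ) ≤ i := i.cast_nonneg
  refine abs_le_of_sq_le_sq' ?_ (by positivity) |>.2
  rw [← Complex.normSq_eq_norm_sq, Complex.normSq_apply]
  simp only [Complex.add_re, Complex.add_im, Complex.natCast_re, Complex.natCast_im, Complex.one_re, Complex.one_im, add_zero]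
  have a1 : (y.re + i + 1) * (y.re + i + 1) ≤ (σ + i + 1) ^ 2 := by nlinarith
  have a2 : y.im * y.im ≤ s ^ 2 := by nlinarith [sq_abs s, sq_abs y.im, abs_nonneg s, abs_nonneg y.im]
  have a3 : s ^ 2 ≤ s ^ 2 / ((i:ℝ) + 1) ^ 2 * (σ + i + 1) ^ 2 := by
    rw [div_mul_eq_mul_div, le_div_iff₀ (by positivity)]
    gcongr; linarith
  have a4 : 0 ≤ s ^ 2 / ((i:ℝ) + 1) ^ 2 := by positivity
  set u := s ^ 2 / ((i:ℝ) + 1) ^ 2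
  have a5 : 0 ≤ (σ + i + 1) ^ 2 := by positivity
  nlinarith [mul_nonneg a4 a5, mul_nonneg a4 (mul_nonneg a4 a5)]

lemma Qf_norm_le (x σ s : ℝ) (hx : 0 < x) (hσ : 0 ≤ σ) (y : ℂ) (h1 : -1/2 ≤ y.re) (h2 : y.re ≤ σ) (h3 : |y.im| ≤ |s|) (k : ℕ) :
    ‖Qf x k y‖ ≤ cosh (π * s) * qf x σ k := by
  unfold Qf qf
  rw [norm_div, Complex.norm_real, Real.norm_of_nonneg (rising_pos x hx _).le, ← mul_div_assoc]
  have := rising_pos x hx (k+1)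
  gcongr
  exact norm_risingprod_le σ s hσ y h1 h2 h3 k

lemma Qf_hasSum (x σ : ℝ) (hx : 0 < x) (hσ : 0 ≤ σ) (h : σ < x) (y : ℂ) (h1 : -1/2 ≤ y.re) (h2 : y.re ≤ σ) :
    HasSum (fun k => Qf x k y) (1 / (x - y)) := by
  have hsum : Summable (fun k => Qf x k y) :=
    Summable.of_norm_bounded ((qf_summable x σ hx hσ h).mul_left _) (fun k => Qf_norm_le x σ y.im hx hσ y h1 h2 le_rfl k)
  rw [hsum.hasSum_iff_tendsto_nat]
  have hne : (x:ℂ) - y ≠ 0 := by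
    intro h0
    have := congrArg Complex.re h0
    simp at this; linarith
  have hpart : ∀ n, ∑ i ∈ Finset.range n, Qf x i y
      = (1 - (∏ i ∈ Finset.range n, (y + i + 1)) / (risingProdR x n : ℂ)) / (x - y) := by
    intro n
    induction n with
    | zero => simp [risingProdR]
    | succ n ih =>
      rw [Finset.sum_range_succ, ih]
      unfold Qf
      rw [rising_succ, Finset.prod_range_succ]
      have h5 : ((risingProdR x n : ℝ) : ℂ) ≠ 0 := by exact_mod_cast (rising_pos x hx n).ne'
      have h6 : (x:ℂ) + n + 1 ≠ 0 := by exact_mod_cast (by positivity : x + n + 1 ≠ 0)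
      push_cast
      field_simp
      ring
  simp only [hpart]
  have hR : Tendsto (fun n : ℕ => (∏ i ∈ Finset.range n, (y + i + 1)) / (risingProdR x n : ℂ)) atTop (𝓝 0) := by
    refine squeeze_zero_norm (a := fun n => cosh (π * y.im) * rf x σ n) (fun n => ?_) ?_
    · unfold rf
      rw [norm_div, Complex.norm_real, Real.norm_of_nonneg (rising_pos x hx _).le, ← mul_div_assoc]
      have := rising_pos x hx n
      gcongr
      exact norm_risingprod_le σ y.im hσ y h1 h2 le_rfl n
    · simpa using (rf_tendsto x σ hx hσ h).const_mul (cosh (π * y.im))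
  simpa using (hR.const_sub 1).div_const ((x:ℂ) - y)

noncomputable def muI : Measure ℝ := volume.restrict (Set.Ioc (0:ℝ) 1)

instance : IsFiniteMeasure muI := by unfold muI; infer_instance

lemma ae_muI : ∀ᵐ p : ℝ × ℝ ∂((volume : Measure ℝ).prod muI), p.2 ∈ Set.Ioc (0:ℝ) 1 :=
  Measure.quasiMeasurePreserving_snd.ae (ae_restrict_mem measurableSet_Ioc)

lemma integral_tpow (n : ℕ) : ∫ t : ℝ, (t:ℂ) ^ n * (1 - t) ∂muI = 1 / (((n:ℂ) + 1) * (n + 2)) := by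
  have h : ∫ t : ℝ, (t:ℂ) ^ n * (1 - t) ∂muI = ((∫ t in (0:ℝ)..1, t ^ n * (1 - t) : ℝ) : ℂ) := by
    rw [intervalIntegral.integral_of_le zero_le_one, ← integral_complex_ofReal]
    unfold muI
    congr 1; ext t; push_cast; rfl
  rw [h]
  have h2 : ∫ t in (0:ℝ)..1, t ^ n * (1 - t) = 1 / (((n:ℝ) + 1) * (n + 2)) := by
    have : ∀ t : ℝ, t ^ n * (1 - t) = t ^ n - t ^ (n+1) := fun t => by ring
    simp only [this]
    rw [intervalIntegral.integral_sub (by simp) (by simp), integral_pow, integral_pow]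
    have h1 : (n:ℝ) + 1 ≠ 0 := by positivity
    have h2 : (n:ℝ) + 2 ≠ 0 := by positivity
    have h3 : (n:ℝ) + 1 + 1 ≠ 0 := by positivity
    push_cast
    simp
    field_simp
    ring
  rw [h2]; push_cast; rfl

lemma integrable_tpow (n : ℕ) : Integrable (fun t : ℝ => (t:ℂ) ^ n * (1 - t)) muI := by
  unfold muI
  exact (ContinuousOn.integrableOn_Icc (by fun_prop)).mono_set Set.Ioc_subset_Icc_self

/-- the basic product integrand -/
noncomputable def bf (f : ℝ) (a : ℕ) (p : ℝ × ℝ) : ℂ :=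
  ((pdens p.1 : ℂ) * Zf f p.1 ^ (a+2)) * ((p.2:ℂ) ^ a * (1 - p.2))

lemma continuous_bf (f : ℝ) (a : ℕ) : Continuous (bf f a) := by
  unfold bf
  have h1 := continuous_pdens
  have h2 := continuous_Zf f
  fun_prop

lemma integrable_bf (f : ℝ) (a : ℕ) : Integrable (bf f a) ((volume : Measure ℝ).prod muI) :=
  (integrable_Zf_pow f (a+2)).mul_prod (integrable_tpow a)

lemma integral_bf (f : ℝ) (a : ℕ) : ∫ p, bf f a p ∂((volume : Measure ℝ).prod muI)
    = (bernPoly (a+2) f : ℂ) / (((a:ℂ) + 1) * (a + 2)) := by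
  unfold bf
  rw [integral_prod_mul (fun s : ℝ => (pdens s : ℂ) * Zf f s ^ (a+2)) (fun t : ℝ => (t:ℂ) ^ a * (1 - t)), moment, integral_tpow]
  ring

noncomputable def gf (f : ℝ) (a : ℕ) (s : ℝ) : ℝ :=
  2 * (|f| + 1) ^ (a+2) * ((1 + |s|) ^ (a+2) / cosh (π * s))

lemma gf_nonneg (f : ℝ) (a : ℕ) (s : ℝ) : 0 ≤ gf f a s := by
  unfold gf; have := Real.cosh_pos (π * s); positivity

lemma integrable_gf (f : ℝ) (a : ℕ) : Integrable (fun p : ℝ × ℝ => gf f a p.1) ((volume : Measure ℝ).prod muI) := by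
  have := ((integrable_pow_div_cosh (a+2)).const_mul (2 * (|f| + 1) ^ (a+2))).mul_prod (integrable_const (μ := muI) (1:ℝ))
  simpa [gf] using this

lemma bf_norm_le (f : ℝ) (a : ℕ) (p : ℝ × ℝ) (hp : p.2 ∈ Set.Ioc (0:ℝ) 1) :
    ‖bf f a p‖ * cosh (π * p.1) ≤ gf f a p.1 := by
  unfold bf gf
  rw [norm_mul, norm_mul, norm_mul, norm_pow (p.2 : ℂ), Complex.norm_real, Complex.norm_real, Real.norm_of_nonneg (pdens_nonneg _),
    ← Complex.ofReal_one, ← Complex.ofReal_sub, Complex.norm_real, Real.norm_of_nonneg hp.1.le, Real.norm_of_nonneg (by linarith [hp.2])]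
  have h1 := norm_Zf_pow_le f p.1 (a+2)
  have h2 := pdens_mul_cosh_le p.1
  have h3 : p.2 ^ a * (1 - p.2) ≤ 1 := by
    have := pow_le_one₀ (n := a) hp.1.le hp.2
    have h4 : 0 ≤ p.2 ^ a := pow_nonneg hp.1.le a
    nlinarith [hp.1, hp.2]
  have h4 : 0 ≤ p.2 ^ a * (1 - p.2) := mul_nonneg (pow_nonneg hp.1.le a) (by linarith [hp.2])
  have hc := Real.cosh_pos (π * p.1)
  have hd := pdens_nonneg p.1
  calc _ = (pdens p.1 * cosh (π * p.1)) * ‖Zf f p.1 ^ (a+2)‖ * (p.2 ^ a * (1 - p.2)) := by ring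
    _ ≤ (2 / cosh (π * p.1)) * ((|f| + 1) ^ (a+2) * (1 + |p.1|) ^ (a+2)) * 1 := by gcongr
    _ = _ := by ring

lemma term_eq (x f : ℝ) (a k : ℕ) :
    ∫ p, bf f a p * Qf x k (p.2 * Zf f p.1) ∂((volume : Measure ℝ).prod muI)
     = (((∑ l ∈ Finset.range (k+1), (stirling1Unsigned (k+1) (l+1) : ℝ) * (bernPoly (a+l+2) f / (((a+l:ℕ) + 1) * ((a+l:ℕ) + 2)))) / risingProdR x (k+1) : ℝ) : ℂ)
     ∧ Integrable (fun p => bf f a p * Qf x k (p.2 * Zf f p.1)) ((volume : Measure ℝ).prod muI) := by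
  have h1 : ∀ p : ℝ × ℝ, bf f a p * Qf x k (p.2 * Zf f p.1)
      = (∑ l ∈ Finset.range (k+1), (stirling1Unsigned (k+1) (l+1) : ℂ) * bf f (a+l) p) / (risingProdR x (k+1) : ℂ) := by
    intro p
    unfold Qf
    rw [← stirling_prod, ← mul_div_assoc, Finset.mul_sum]
    congr 1
    refine Finset.sum_congr rfl fun l _ => ?_
    unfold bf
    ring
  simp only [h1]
  constructor
  · rw [integral_div, integral_finsetSum _ (fun l _ => (integrable_bf f (a+l)).const_mul _)]
    simp only [integral_const_mul, integral_bf]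
    push_cast
    rfl
  · exact (integrable_finsetSum _ (fun l _ => (integrable_bf f (a+l)).const_mul _)).div_const _

lemma y_bounds (x f : ℝ) (hf0 : 0 ≤ f) (hf1 : f < 1) (p : ℝ × ℝ) (hp : p.2 ∈ Set.Ioc (0:ℝ) 1) :
    -1/2 ≤ (p.2 * Zf f p.1).re ∧ (p.2 * Zf f p.1).re ≤ max 0 (f - 1/2) ∧ |(p.2 * Zf f p.1).im| ≤ |p.1| := by
  rw [Complex.re_ofReal_mul, Complex.im_ofReal_mul, Zf_re, Zf_im]
  refine ⟨by nlinarith [hp.1, hp.2], ?_, ?_⟩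
  · rcases le_total (f - 1/2) 0 with h | h
    · exact le_max_of_le_left (by nlinarith [hp.1])
    · exact le_max_of_le_right (by nlinarith [hp.2])
  · rw [abs_mul, abs_neg, abs_of_pos hp.1]
    exact mul_le_of_le_one_left (abs_nonneg _) hp.2

lemma integrable_quot (x f : ℝ) (hf0 : 0 ≤ f) (hf1 : f < 1) (hσ : max 0 (f - 1/2) < x) (a : ℕ) :
    Integrable (fun p : ℝ × ℝ => bf f a p * (1 / (x - p.2 * Zf f p.1))) ((volume : Measure ℝ).prod muI) := by
  refine (((integrable_bf f a).norm).mul_const (1 / (x - max 0 (f - 1/2)))).mono' ?_ ?_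
  · have h1 := (continuous_bf f a).measurable
    have h2 := (continuous_Zf f).measurable
    refine Measurable.aestronglyMeasurable ?_
    refine h1.mul (measurable_const.div (measurable_const.sub ?_))
    exact (Complex.measurable_ofReal.comp measurable_snd).mul (h2.comp measurable_fst)
  · filter_upwards [ae_muI] with p hp
    obtain ⟨_, h2, _⟩ := y_bounds x f hf0 hf1 p hp
    rw [norm_mul, norm_div, norm_one]
    have h3 : x - max 0 (f - 1/2) ≤ ‖(x:ℂ) - p.2 * Zf f p.1‖ := by
      refine le_trans ?_ (Complex.re_le_norm _)
      rw [Complex.sub_re, Complex.ofReal_re]; linarith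
    have : 0 < x - max 0 (f - 1/2) := by linarith
    gcongr

lemma series_main (x f : ℝ) (hx : 0 < x) (hf0 : 0 ≤ f) (hf1 : f < 1) (hσ : max 0 (f - 1/2) < x) (a : ℕ) :
    Summable (fun k => ‖∫ p, bf f a p * Qf x k (p.2 * Zf f p.1) ∂((volume : Measure ℝ).prod muI)‖) ∧
    HasSum (fun k => ∫ p, bf f a p * Qf x k (p.2 * Zf f p.1) ∂((volume : Measure ℝ).prod muI))
      (∫ p, bf f a p * (1 / (x - p.2 * Zf f p.1)) ∂((volume : Measure ℝ).prod muI)) := by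
  set σ := max 0 (f - 1/2) with hσd
  have hσ0 : 0 ≤ σ := le_max_left _ _
  have hb : ∀ k, ∀ᵐ p : ℝ × ℝ ∂((volume : Measure ℝ).prod muI), ‖bf f a p * Qf x k (p.2 * Zf f p.1)‖ ≤ gf f a p.1 * qf x σ k := by
    intro k
    filter_upwards [ae_muI] with p hp
    obtain ⟨h1, h2, h3⟩ := y_bounds x f hf0 hf1 p hp
    rw [norm_mul]
    calc _ ≤ ‖bf f a p‖ * (cosh (π * p.1) * qf x σ k) := by
          gcongr; exact Qf_norm_le x σ p.1 hx hσ0 _ h1 h2 h3 k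
      _ = (‖bf f a p‖ * cosh (π * p.1)) * qf x σ k := by ring
      _ ≤ _ := by
          have := qf_nonneg x σ hx hσ0 k
          gcongr; exact bf_norm_le f a p hp
  have hs : Summable (fun k => ∫ p, ‖bf f a p * Qf x k (p.2 * Zf f p.1)‖ ∂((volume : Measure ℝ).prod muI)) := by
    refine Summable.of_nonneg_of_le (fun k => integral_nonneg fun p => norm_nonneg _) (fun k => ?_)
      ((qf_summable x σ hx hσ0 hσ).mul_left (∫ p : ℝ × ℝ, gf f a p.1 ∂((volume : Measure ℝ).prod muI)))
    rw [← integral_mul_const]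
    exact integral_mono_ae (term_eq x f a k).2.norm ((integrable_gf f a).mul_const _) (hb k)
  refine ⟨Summable.of_nonneg_of_le (fun k => norm_nonneg _) (fun k => norm_integral_le_integral_norm _) hs, ?_⟩
  have := hasSum_integral_of_summable_integral_norm (fun k => (term_eq x f a k).2) hs
  have he : (∫ p, bf f a p * (1 / (x - p.2 * Zf f p.1)) ∂((volume : Measure ℝ).prod muI))
      = ∫ p, ∑' k, bf f a p * Qf x k (p.2 * Zf f p.1) ∂((volume : Measure ℝ).prod muI) := by
    refine integral_congr_ae ?_
    filter_upwards [ae_muI] with p hp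
    obtain ⟨h1, h2, h3⟩ := y_bounds x f hf0 hf1 p hp
    exact (((Qf_hasSum x σ hx hσ0 hσ _ h1 h2).mul_left (bf f a p)).tsum_eq).symm
  rw [he]; exact this

lemma rho_prod (x f : ℝ) (hx : 0 < x) (hfx : f ≤ x) (hf0 : 0 ≤ f) (hf1 : f < 1) (hσ : max 0 (f - 1/2) < x) :
    ∫ p, bf f 0 p * (1 / (x - p.2 * Zf f p.1)) ∂((volume : Measure ℝ).prod muI)
     = (∫ s : ℝ, (pdens s : ℂ) * Hf (x - Zf f s)) - Hf x + bernPoly 1 f * Complex.log x := by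
  rw [integral_prod _ (integrable_quot x f hf0 hf1 hσ 0), ← rho_eq x f hx hfx]
  congr 1; ext s
  rw [intervalIntegral.integral_of_le zero_le_one, ← mul_assoc, ← integral_const_mul]
  unfold muI bf
  congr 1; ext t
  simp
  ring

lemma reduce_a (x f : ℝ) (hx : 0 < x) (hf0 : 0 ≤ f) (hf1 : f < 1) (hσ : max 0 (f - 1/2) < x) (a : ℕ) :
    ∫ p, bf f 0 p * (1 / (x - p.2 * Zf f p.1)) ∂((volume : Measure ℝ).prod muI)
    = (∑ l ∈ Finset.range a, (bernPoly (l+2) f : ℂ) / (((l:ℂ) + 1) * (l + 2)) * (1 / (x:ℂ) ^ (l+1)))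
      + 1 / (x:ℂ) ^ a * ∫ p, bf f a p * (1 / (x - p.2 * Zf f p.1)) ∂((volume : Measure ℝ).prod muI) := by
  have hx' : (x:ℂ) ≠ 0 := by exact_mod_cast hx.ne'
  induction a with
  | zero => simp
  | succ a ih =>
    rw [ih, Finset.sum_range_succ, add_assoc]
    congr 1
    have h1 : ∫ p, bf f a p * (1 / (x - p.2 * Zf f p.1)) ∂((volume : Measure ℝ).prod muI)
       = ∫ p, (bf f a p * (1 / x) + (bf f (a+1) p * (1 / (x - p.2 * Zf f p.1))) * (1 / x)) ∂((volume : Measure ℝ).prod muI) := by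
      refine integral_congr_ae ?_
      filter_upwards [ae_muI] with p hp
      obtain ⟨_, h2, _⟩ := y_bounds x f hf0 hf1 p hp
      have hne : (x:ℂ) - p.2 * Zf f p.1 ≠ 0 := by
        intro h0
        have := congrArg Complex.re h0
        rw [Complex.sub_re, Complex.ofReal_re, Complex.zero_re] at this
        linarith
      have : bf f (a+1) p = bf f a p * (p.2 * Zf f p.1) := by unfold bf; ring
      rw [this]
      field_simp
      ring
    rw [h1, integral_add ((integrable_bf f a).mul_const _) ((integrable_quot x f hf0 hf1 hσ (a+1)).mul_const _),
      integral_mul_const, integral_mul_const, integral_bf]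
    field_simp
    ring

lemma term_rewrite (x f : ℝ) (a k : ℕ) :
    (-1 : ℝ) ^ (k + 1) *
          (∑ l ∈ Finset.Icc 1 (k + 1),
            (-1 : ℝ) ^ l / ((l + a) * (l + a + 1)) * (S1 (k + 1) l : ℝ) *
              bernPoly (l + a + 1) f) / risingProdR x (k + 1)
    = (∑ l ∈ Finset.range (k+1), (stirling1Unsigned (k+1) (l+1) : ℝ) * (bernPoly (a+l+2) f / (((a+l:ℕ) + 1) * ((a+l:ℕ) + 2)))) / risingProdR x (k+1) := by
  congr 1
  rw [Finset.mul_sum, ← Finset.Ico_add_one_right_eq_Icc, Finset.sum_Ico_eq_sum_range]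
  refine Finset.sum_congr (by simp) fun l _ => ?_
  unfold S1
  rw [show 1 + l + a + 1 = a + l + 2 by ring, show 1 + l = l + 1 by ring]
  push_cast
  have h : (-1:ℝ) ^ (k+1) * (-1) ^ (l+1) * (-1) ^ (k + 1 + (l + 1)) = 1 := by
    rw [← pow_add, ← pow_add, ← two_mul, pow_mul]; simp
  rw [show ((l:ℝ) + 1 + a) * (l + 1 + a + 1) = ((a:ℝ) + l + 1) * (a + l + 2) by ring]
  linear_combination ((stirling1Unsigned (k+1) (l+1) : ℝ) * (bernPoly (a+l+2) f / ((((a:ℝ)+l) + 1) * ((a+l) + 2)))) * h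

open Finset Real in
/-- Generalized convergent Stirling summation formula for the log-factorial sum
(formula (57) from the Conclusion of the paper). -/
theorem stirling_log_factorial_formula (x : ℝ) (hx : 0 < x) (a : ℕ) :
    Summable (fun k : ℕ =>
      |(-1 : ℝ) ^ (k + 1) *
          (∑ l ∈ Icc 1 (k + 1),
            (-1 : ℝ) ^ l / ((l + a) * (l + a + 1)) * (S1 (k + 1) l : ℝ) *
              bernPoly (l + a + 1) (Int.fract x)) /
        risingProdR x (k + 1)|) ∧
    (∑ k ∈ Icc 1 ⌊x⌋₊, Real.log k) =
      x * Real.log x - x + 1 / 2 * Real.log (2 * π) -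
        bernPoly 1 (Int.fract x) * Real.log x +
        (∑ k ∈ Icc 1 a, bernPoly (k + 1) (Int.fract x) / (k * (k + 1) * x ^ k)) +
        1 / x ^ a *
          ∑' k : ℕ,
            (-1 : ℝ) ^ (k + 1) *
                (∑ l ∈ Icc 1 (k + 1),
                  (-1 : ℝ) ^ l / ((l + a) * (l + a + 1)) * (S1 (k + 1) l : ℝ) *
                    bernPoly (l + a + 1) (Int.fract x)) /
              risingProdR x (k + 1) := by
  have hf0 := Int.fract_nonneg x
  have hf1 := Int.fract_lt_one x
  have hxn : x = (⌊x⌋₊ : ℝ) + Int.fract x := by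
    rw [natCast_floor_eq_intCast_floor hx.le]
    exact (Int.floor_add_fract x).symm
  have hfx : Int.fract x ≤ x := by
    have : (0:ℝ) ≤ (⌊x⌋₊ : ℝ) := Nat.cast_nonneg _
    linarith
  have hσ : max 0 (Int.fract x - 1/2) < x := max_lt hx (by linarith)
  simp only [term_rewrite]
  set f := Int.fract x with hf
  obtain ⟨hs1, hs2⟩ := series_main x f hx hf0 hf1 hσ a
  simp only [(term_eq x f a _).1] at hs1 hs2
  constructor
  · simpa only [Complex.norm_real, Real.norm_eq_abs] using hs1
  have hr := reduce_a x f hx hf0 hf1 hσ a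
  rw [rho_prod x f hx hfx hf0 hf1 hσ, ← hs2.tsum_eq] at hr
  have hA : ∫ s : ℝ, (pdens s : ℂ) * Hf (x - Zf f s) = Af ⌊x⌋₊ := by
    unfold Af
    congr 1; ext s
    congr 2
    have : (x:ℂ) = (⌊x⌋₊ : ℂ) + f := by exact_mod_cast hxn
    rw [this]
    simp [Zf]; ring
  rw [hA, Af_val, Hf, ← Complex.ofReal_log hx.le, ← Complex.ofReal_tsum] at hr
  have hsum : ∑ k ∈ Icc 1 a, bernPoly (k + 1) f / (k * (k + 1) * x ^ k)
      = ∑ l ∈ Finset.range a, bernPoly (l+2) f / (((l:ℝ) + 1) * (l + 2)) * (1 / x ^ (l+1)) := by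
    rw [← Finset.Ico_add_one_right_eq_Icc, Finset.sum_Ico_eq_sum_range]
    refine Finset.sum_congr (by simp) fun l _ => ?_
    rw [show 1 + l + 1 = l + 2 by ring, show 1 + l = l + 1 by ring]
    push_cast
    rw [div_mul_div_comm, mul_one]
    congr 2; ring
  rw [hsum]
  norm_cast at hr
  push_cast at hr ⊢
  linear_combination hr
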